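/- Let Σ be a first-order signature. If a class 𝒦 of Σ-structures is axiomatized by a set of basic Horn formulas, then 𝒦 is closed under isomorphisms, substructures, and reduced products. -/

import Mathlib

/-!
Common definitions: products, reduced products, basic Horn formulas,
bundled structures, diagrams, units.
-/

namespace ZFHorn

open FirstOrder Language Structure Filter Set

universe u v w u' v' w'

variable {L : FirstOrder.Language.{v, w}}

/-- The direct product structure on a dependent function type. -/
instance piStructure {ι : Type*} (M : ι → Type*) [∀ i, L.Structure (M i)] :
    L.Structure (∀ i, M i) where
  funMap f x i := funMap f fun k => x k i
  RelMap r x := ∀ i, RelMap r fun k => x k i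

/-- The reduced-product prestructure on `∀ i, M i` modulo a filter `F`:
functions act coordinatewise, and a relation holds precisely when it holds on a
set of coordinates belonging to `F`. -/
instance reducedProductPrestructure {ι : Type*} (F : Filter ι) (M : ι → Type*)
    [∀ i, L.Structure (M i)] : L.Prestructure (F.productSetoid M) :=
  { toStructure :=
      { funMap := fun {_} f x i => funMap f fun k => x k i
        RelMap := fun {_} r x => ∀ᶠ i in F, RelMap r fun k => x k i }
    fun_equiv := fun {n} f x y xy => by
      refine mem_of_superset (iInter_mem.2 xy) fun i hi => ?_
      simp only [Set.mem_iInter, Set.mem_setOf_eq] at hi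
      simp only [Set.mem_setOf_eq, hi]
    rel_equiv := fun {n} r x y xy => by
      rw [← iff_eq_eq]
      constructor
      · intro hx
        refine mem_of_superset (inter_mem hx (iInter_mem.2 xy)) ?_
        rintro i ⟨h1, h2⟩
        simp only [Set.mem_iInter, Set.mem_setOf_eq] at *
        rw [← funext h2]
        exact h1
      · intro hy
        refine mem_of_superset (inter_mem hy (iInter_mem.2 xy)) ?_
        rintro i ⟨h1, h2⟩
        simp only [Set.mem_iInter, Set.mem_setOf_eq] at *
        rw [funext h2]
        exact h1 }

/-- The reduced product `∏_F M i` of a family of structures modulo a filter,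
as a first-order structure. -/
instance reducedProductStructure {ι : Type*} (F : Filter ι) (M : ι → Type*)
    [∀ i, L.Structure (M i)] : L.Structure (F.Product M) :=
  Language.quotientStructure

instance productNonempty {ι : Type*} (F : Filter ι) (M : ι → Type*)
    [∀ i, Nonempty (M i)] : Nonempty (F.Product M) :=
  ⟨(↑(fun i => Classical.arbitrary (M i)) : F.Product M)⟩

section Horn

variable {α : Type u'}

/-- `orList φ [ψ₁, …, ψₖ]` is the disjunction `φ ∨ ψ₁ ∨ ⋯ ∨ ψₖ`. -/
def orList : L.Formula α → List (L.Formula α) → L.Formula α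
  | φ, [] => φ
  | φ, ψ :: l => φ ⊔ orList ψ l

/-- A list of formulas is a Horn list if each member is atomic or the negation of
an atomic formula, and at most one member is atomic. -/
def IsHornList (l : List (L.Formula α)) : Prop :=
  (∀ χ ∈ l, BoundedFormula.IsAtomic χ ∨
      ∃ θ : L.Formula α, BoundedFormula.IsAtomic θ ∧ χ = θ.not) ∧
    ∀ i j : Fin l.length,
      BoundedFormula.IsAtomic (l.get i) → BoundedFormula.IsAtomic (l.get j) → i = j

/-- A basic Horn formula is a disjunction `φ₀ ∨ ⋯ ∨ φₙ` in which at most one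
disjunct is atomic, the rest being negations of atomic formulas. -/
def IsBasicHorn (φ : L.Formula α) : Prop :=
  ∃ (ψ : L.Formula α) (l : List (L.Formula α)), φ = orList ψ l ∧ IsHornList (ψ :: l)

/-- A strict basic Horn formula (quasi-identity) is a basic Horn formula in which
at least one disjunct is atomic. -/
def IsQuasiIdentity (φ : L.Formula α) : Prop :=
  ∃ (ψ : L.Formula α) (l : List (L.Formula α)), φ = orList ψ l ∧ IsHornList (ψ :: l) ∧
    ∃ χ ∈ ψ :: l, BoundedFormula.IsAtomic χ

end Horn

/-- `SatAll M φ` means that every assignment of the free variables satisfies `φ` in `M`. -/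
def SatAll (M : Type u') [L.Structure M] {α : Type v'} (φ : L.Formula α) : Prop :=
  ∀ v : α → M, φ.Realize v

/-- A unit is a one-element structure in which every relation holds. -/
def IsUnit (L : FirstOrder.Language.{v, w}) (M : Type u') [L.Structure M] : Prop :=
  (∃ a : M, ∀ b : M, b = a) ∧
    ∀ (n : ℕ) (r : L.Relations n) (x : Fin n → M), RelMap r x

/-- A bundled nonempty `L`-structure. -/
structure SStruct (L : FirstOrder.Language.{v, w}) : Type (max (u + 1) v w) where
  /-- the underlying type -/
  carrier : Type u
  /-- the structure on the underlying type -/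
  struc : L.Structure carrier
  /-- the underlying type is nonempty -/
  nonempty : Nonempty carrier

attribute [instance] SStruct.struc SStruct.nonempty

instance : CoeSort (SStruct.{u} L) (Type u) :=
  ⟨SStruct.carrier⟩

/-- Bundle a nonempty structure. -/
def SStruct.of (M : Type u) [i : L.Structure M] [h : Nonempty M] : SStruct.{u} L :=
  ⟨M, i, h⟩

variable (L)

/-- A class of structures is closed under isomorphisms. -/
def ClosedUnderIso (K : Set (SStruct.{u} L)) : Prop :=
  ∀ M ∈ K, ∀ N : SStruct.{u} L, Nonempty ((M : Type u) ≃[L] (N : Type u)) → N ∈ K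

/-- A class of structures is closed under (nonempty) substructures. -/
def ClosedUnderSubstructures (K : Set (SStruct.{u} L)) : Prop :=
  ∀ M ∈ K, ∀ (S : L.Substructure (M : Type u)) (h : Nonempty S),
    (⟨S, inferInstance, h⟩ : SStruct.{u} L) ∈ K

/-- A class of structures is closed under reduced products (modulo proper filters). -/
def ClosedUnderReducedProducts (K : Set (SStruct.{u} L)) : Prop :=
  ∀ (ι : Type u) (F : Filter ι), F.NeBot → ∀ B : ι → SStruct.{u} L, (∀ i, B i ∈ K) →
    (⟨F.Product fun i => (B i : Type u), inferInstance, inferInstance⟩ : SStruct.{u} L) ∈ K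

/-- A class of structures is closed under homomorphic images. -/
def ClosedUnderHomImages (K : Set (SStruct.{u} L)) : Prop :=
  ∀ M ∈ K, ∀ (N : SStruct.{u} L) (f : (M : Type u) →[L] (N : Type u)),
    Function.Surjective f → N ∈ K

/-- A class of structures is closed under direct products. -/
def ClosedUnderProducts (K : Set (SStruct.{u} L)) : Prop :=
  ∀ (ι : Type u) (B : ι → SStruct.{u} L), (∀ i, B i ∈ K) →
    (⟨∀ i, (B i : Type u), inferInstance, inferInstance⟩ : SStruct.{u} L) ∈ K

/-- A class of structures is axiomatized by a set of formulas `Γ` if it consists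
exactly of those structures satisfying every formula of `Γ`. -/
def AxiomatizedBy (K : Set (SStruct.{u} L)) (Γ : Set (L.Formula ℕ)) : Prop :=
  ∀ M : SStruct.{u} L, M ∈ K ↔ ∀ φ ∈ Γ, SatAll (M : Type u) φ

/-- The positive diagram of `A`: all atomic `Σ(A)`-sentences true in `A`. -/
def DiagPlus (A : Type u') [L.Structure A] : Set ((L[[A]]).Sentence) :=
  {φ | BoundedFormula.IsAtomic φ ∧ A ⊨ φ}

/-- The negative diagram of `A`: all negated atomic `Σ(A)`-sentences true in `A`. -/
def DiagMinus (A : Type u') [L.Structure A] : Set ((L[[A]]).Sentence) :=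
  {φ | ∃ ψ : (L[[A]]).Sentence, BoundedFormula.IsAtomic ψ ∧ φ = ψ.not ∧ A ⊨ φ}

/-- The diagram of `A`. -/
def Diag (A : Type u') [L.Structure A] : Set ((L[[A]]).Sentence) :=
  DiagPlus L A ∪ DiagMinus L A

/-!
Isomorphisms preserve every formula, and embeddings reflect universal ones. In a reduced product
an atomic formula holds at a tuple of classes exactly when it holds at `F`-almost all coordinates.
Suppose all disjuncts of a basic Horn formula fail in the product. Each atom that it negates then
holds at `F`-almost all coordinates, and so do all of them at once, there being finitely many. At
these coordinates a true disjunct must be atomic. As `F` is proper there is such a coordinate, so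
an atomic disjunct exists; being the only one, it holds at `F`-almost all coordinates, hence in
the product, a contradiction.
-/

section

variable {L} {α : Type*}

section HornFormula

theorem realize_orList {M : Type*} [L.Structure M] {x : α → M} (ψ : L.Formula α)
    (l : List (L.Formula α)) : (orList ψ l).Realize x ↔ ∃ χ ∈ ψ :: l, χ.Realize x := by
  induction l generalizing ψ with
  | nil => simp only [orList, List.mem_singleton, exists_eq_left]
  | cons χ l ih => rw [orList, Formula.realize_sup, ih, List.exists_mem_cons_iff _ ψ]

theorem isQF_orList {ψ : L.Formula α} {l : List (L.Formula α)}
    (h : ∀ χ ∈ ψ :: l, BoundedFormula.IsQF χ) : BoundedFormula.IsQF (orList ψ l) := by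
  induction l generalizing ψ with
  | nil => exact h ψ List.mem_cons_self
  | cons χ l ih =>
    exact (h ψ List.mem_cons_self).sup (ih fun θ hθ => h θ (List.mem_cons_of_mem ψ hθ))

theorem IsHornList.isQF_of_mem {l : List (L.Formula α)} (hl : IsHornList l) {χ : L.Formula α}
    (hχ : χ ∈ l) : BoundedFormula.IsQF χ := by
  rcases hl.1 χ hχ with hatom | ⟨θ, hθ, rfl⟩
  · exact hatom.isQF
  · exact hθ.isQF.not

theorem IsHornList.eq_of_isAtomic {l : List (L.Formula α)} (hl : IsHornList l)
    {χ θ : L.Formula α} (hχl : χ ∈ l) (hθl : θ ∈ l) (hχ : BoundedFormula.IsAtomic χ)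
    (hθ : BoundedFormula.IsAtomic θ) : χ = θ := by
  obtain ⟨i, rfl⟩ := List.get_of_mem hχl
  obtain ⟨j, rfl⟩ := List.get_of_mem hθl
  rw [hl.2 i j hχ hθ]

theorem IsBasicHorn.isQF {φ : L.Formula α} (hφ : IsBasicHorn φ) : BoundedFormula.IsQF φ := by
  obtain ⟨ψ, l, rfl, hl⟩ := hφ
  exact isQF_orList fun _ => hl.isQF_of_mem

end HornFormula

section Maps

variable {M N : Type*} [L.Structure M] [L.Structure N] {φ : L.Formula α}

theorem SatAll.of_equiv (h : SatAll M φ) (e : M ≃[L] N) : SatAll N φ := fun v =>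
  (StrongHomClass.realize_formula e.symm φ).1 (h (e.symm ∘ v))

theorem SatAll.of_embedding (h : SatAll N φ) (hφ : BoundedFormula.IsUniversal φ) (f : M ↪[L] N) :
    SatAll M φ := fun v =>
  hφ.realize_embedding f <| by
    rw [Subsingleton.elim (f ∘ default) default]
    exact h (f ∘ v)

end Maps

section ReducedProduct

variable {ι : Type*} {F : Filter ι} {M : ι → Type*} [∀ i, L.Structure (M i)]

theorem exists_eq_coe_product (y : α → F.Product M) :
    ∃ x : α → ∀ i, M i, y = fun a => (x a : F.Product M) :=
  ⟨fun a => (y a).out, funext fun a => (Quotient.out_eq' (y a)).symm⟩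

theorem term_realize_product (t : L.Term α) (x : α → ∀ i, M i) :
    t.realize (fun a => (x a : F.Product M)) =
      ((fun i => t.realize fun a => x a i : ∀ i, M i) : F.Product M) := by
  induction t with
  | var => rfl
  | func f ts ih =>
    simp only [Term.realize, ih]
    exact funMap_quotient_mk' (s := F.productSetoid M) f _

theorem boundedFormula_realize_product_of_isAtomic {n : ℕ} {φ : L.BoundedFormula α n}
    (hφ : φ.IsAtomic) (x : α → ∀ i, M i) (y : Fin n → ∀ i, M i) :
    φ.Realize (fun a => (x a : F.Product M)) (fun k => (y k : F.Product M)) ↔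
      ∀ᶠ i in F, φ.Realize (fun a => x a i) (fun k => y k i) := by
  have elim_coe : Sum.elim (fun a => (x a : F.Product M)) (fun k => (y k : F.Product M)) =
      fun s => ((Sum.elim x y s : ∀ i, M i) : F.Product M) :=
    (Sum.comp_elim (fun z : ∀ i, M i => (z : F.Product M)) x y).symm
  have elim_apply (i : ι) : Sum.elim (fun a => x a i) (fun k => y k i) =
      fun s => Sum.elim x y s i :=
    (Sum.comp_elim (fun z : ∀ i, M i => z i) x y).symm
  cases hφ with
  | equal t₁ t₂ =>
    simp only [BoundedFormula.realize_bdEqual, elim_coe, elim_apply, term_realize_product]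
    exact Quotient.eq''
  | rel R ts =>
    simp only [BoundedFormula.realize_rel, elim_coe, elim_apply, term_realize_product]
    exact relMap_quotient_mk' (s := F.productSetoid M) R _

theorem formula_realize_product_of_isAtomic {φ : L.Formula α} (hφ : BoundedFormula.IsAtomic φ)
    (x : α → ∀ i, M i) :
    φ.Realize (fun a => (x a : F.Product M)) ↔ ∀ᶠ i in F, φ.Realize fun a => x a i := by
  simpa only [Formula.Realize, Subsingleton.elim _ default] using
    boundedFormula_realize_product_of_isAtomic (F := F) hφ x default

theorem IsHornList.eventually_isAtomic_of_realize {l : List (L.Formula α)} (hl : IsHornList l)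
    {x : α → ∀ i, M i} (hfail : ∀ χ ∈ l, ¬ χ.Realize fun a => (x a : F.Product M)) :
    ∀ᶠ i in F, ∀ χ ∈ l, (χ.Realize fun a => x a i) → BoundedFormula.IsAtomic χ := by
  refine (eventually_all_finite l.finite_toSet).2 fun χ hχ => ?_
  rcases hl.1 χ hχ with hatom | ⟨θ, hθ, rfl⟩
  · exact .of_forall fun _ _ => hatom
  · have hθ_product : θ.Realize fun a => (x a : F.Product M) := by
      simpa only [Formula.realize_not, not_not] using hfail _ hχ
    filter_upwards [(formula_realize_product_of_isAtomic hθ x).1 hθ_product] with i hθi hnot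
    exact absurd hθi (Formula.realize_not.1 hnot)

theorem IsHornList.exists_realize_product [F.NeBot] {l : List (L.Formula α)} (hl : IsHornList l)
    {x : α → ∀ i, M i} (h : ∀ᶠ i in F, ∃ χ ∈ l, χ.Realize fun a => x a i) :
    ∃ χ ∈ l, χ.Realize fun a => (x a : F.Product M) := by
  by_contra! hfail
  have hatomic : ∀ᶠ i in F, ∃ χ ∈ l, BoundedFormula.IsAtomic χ ∧ χ.Realize fun a => x a i := by
    filter_upwards [h, hl.eventually_isAtomic_of_realize hfail] with i ⟨χ, hχl, hχ⟩ hi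
    exact ⟨χ, hχl, hi χ hχl hχ, hχ⟩
  obtain ⟨-, χ, hχl, hχ, -⟩ := hatomic.exists
  refine hfail χ hχl ((formula_realize_product_of_isAtomic hχ x).2 ?_)
  filter_upwards [hatomic] with i ⟨θ, hθl, hθ, hθi⟩
  rwa [hl.eq_of_isAtomic hχl hθl hχ hθ]

theorem IsBasicHorn.realize_product [F.NeBot] {φ : L.Formula α} (hφ : IsBasicHorn φ)
    {x : α → ∀ i, M i} (h : ∀ᶠ i in F, φ.Realize fun a => x a i) :
    φ.Realize fun a => (x a : F.Product M) := by
  obtain ⟨ψ, l, rfl, hl⟩ := hφ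
  simp only [realize_orList] at h ⊢
  exact hl.exists_realize_product h

theorem IsBasicHorn.satAll_product [F.NeBot] {φ : L.Formula α} (hφ : IsBasicHorn φ)
    (h : ∀ᶠ i in F, SatAll (M i) φ) : SatAll (F.Product M) φ := by
  intro y
  obtain ⟨x, rfl⟩ := exists_eq_coe_product y
  exact hφ.realize_product (h.mono fun i hi => hi fun a => x a i)

end ReducedProduct

namespace AxiomatizedBy

variable {K : Set (SStruct.{u} L)} {Γ : Set (L.Formula ℕ)}

theorem closedUnderIso (hK : AxiomatizedBy L K Γ) : ClosedUnderIso L K :=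
  fun M hM N ⟨e⟩ => (hK N).2 fun φ hφ => ((hK M).1 hM φ hφ).of_equiv e

theorem closedUnderSubstructures (hK : AxiomatizedBy L K Γ)
    (hΓ : ∀ φ ∈ Γ, BoundedFormula.IsUniversal φ) : ClosedUnderSubstructures L K :=
  fun M hM S _ => (hK _).2 fun φ hφ => ((hK M).1 hM φ hφ).of_embedding (hΓ φ hφ) S.subtype

theorem closedUnderReducedProducts (hK : AxiomatizedBy L K Γ) (hΓ : ∀ φ ∈ Γ, IsBasicHorn φ) :
    ClosedUnderReducedProducts L K :=
  fun _ _ _ B hB => (hK _).2 fun φ hφ =>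
    (hΓ φ hφ).satAll_product (.of_forall fun i => (hK (B i)).1 (hB i) φ hφ)

end AxiomatizedBy

end

/-- The easy direction of Theorem 5: a class axiomatized by basic Horn formulas is closed
under isomorphisms, substructures, and reduced products. -/
theorem closed_of_basicHorn_axiomatized {L : FirstOrder.Language.{u, u}}
    (K : Set (SStruct.{u} L)) (Γ : Set (L.Formula ℕ))
    (hΓ : ∀ φ ∈ Γ, IsBasicHorn φ) (hK : AxiomatizedBy L K Γ) :
    ClosedUnderIso L K ∧ ClosedUnderSubstructures L K ∧
      ClosedUnderReducedProducts L K :=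
  ⟨hK.closedUnderIso,
    hK.closedUnderSubstructures fun φ hφ => (hΓ φ hφ).isQF.isUniversal,
    hK.closedUnderReducedProducts hΓ⟩

end ZFHorn
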